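/- arXiv:2404.12350 — 2 statements merged into one kernel-verified Lean document; each statement's English description precedes it below -/
import Mathlib

section
/- Assume f satisfies the ellipticity condition (f_i(λ) > 0 on Γ for all i) and the concavity condition. Then the set Γ_G^f = {λ ∈ Γ : f(tλ) stays bounded below as t → +∞} is a cone with vertex at the origin (closed under multiplication by positive scalars), is invariant under permutations of the coordinates, is convex, and satisfies Γₙ ⊆ Γ_G^f ⊆ Γ. Consequently, the interior of Γ_G^f is an open symmetric convex cone with vertex at the origin satisfying Γₙ ⊆ int(Γ_G^f) ⊆ Γ. -/
open Filter Topology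

/-- The `i`-th partial derivative `f_i(x) = ∂f/∂λ_i (x)`. -/
noncomputable def fpartial {n : ℕ} (f : EuclideanSpace ℝ (Fin n) → ℝ) (i : Fin n)
    (x : EuclideanSpace ℝ (Fin n)) : ℝ :=
  fderiv ℝ f x (EuclideanSpace.single i 1)

/-- The cone `Γ_G^f = {λ ∈ Γ : f(tλ) stays bounded below as t → +∞}`. -/
def GammaG {n : ℕ} (Γ : Set (EuclideanSpace ℝ (Fin n)))
    (f : EuclideanSpace ℝ (Fin n) → ℝ) : Set (EuclideanSpace ℝ (Fin n)) :=
  {x ∈ Γ | ∃ C : ℝ, ∀ᶠ t : ℝ in atTop, C ≤ f (t • x)}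

/-!
Boundedness below along a ray is preserved by rescaling the ray, by linear symmetries of `f`, and,
through concavity, by convex combinations of rays; this makes `Γ_G^f` a symmetric convex cone.
Ellipticity makes `f` nondecreasing in each variable, so that for `x ∈ Γₙ` and `t ≥ 1` we get
`f (t • x) ≥ f x`, whence `Γₙ ⊆ Γ_G^f`. Since `Γₙ` is open, it lies in the interior, and dilations
and coordinate permutations are homeomorphisms, so the interior inherits all these properties.
-/

section Ray

variable {E : Type*} [AddCommGroup E] [Module ℝ E] {s : Set E} {f : E → ℝ} {x : E}

/-- Cones with vertex at the origin, as stability under dilation by positive scalars. The cone need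
not be convex, and it need not contain the origin. -/
def IsCone (s : Set E) : Prop :=
  ∀ x ∈ s, ∀ t : ℝ, 0 < t → t • x ∈ s

/-- The vectors along whose ray `f` is bounded below near infinity, on the whole space: the part of
`GammaG Γ f` that does not depend on `Γ`. -/
def raysBddBelow (f : E → ℝ) : Set E :=
  {x | IsBoundedUnder (· ≥ ·) atTop fun t : ℝ => f (t • x)}

theorem isCone_raysBddBelow (f : E → ℝ) : IsCone (raysBddBelow f) := by
  intro x hx t ht
  have hscale : Tendsto (fun r : ℝ => r * t) atTop atTop := tendsto_id.atTop_mul_const ht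
  simpa only [raysBddBelow, Set.mem_ofPred_eq, Function.comp_def, mul_smul] using
    hscale.isBoundedUnder_comp hx

theorem mem_raysBddBelow_of_forall_le (h : ∀ t : ℝ, 1 ≤ t → f x ≤ f (t • x)) :
    x ∈ raysBddBelow f :=
  ⟨f x, (eventually_ge_atTop 1).mono h⟩

namespace IsCone

theorem inter {t : Set E} (hs : IsCone s) (ht : IsCone t) : IsCone (s ∩ t) :=
  fun x hx r hr => ⟨hs x hx.1 r hr, ht x hx.2 r hr⟩

theorem eventually_smul_mem (hs : IsCone s) (hx : x ∈ s) : ∀ᶠ t : ℝ in atTop, t • x ∈ s :=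
  (eventually_gt_atTop 0).mono (hs x hx)

theorem interior [TopologicalSpace E] [ContinuousConstSMul ℝ E] (hs : IsCone s) :
    IsCone (interior s) :=
  fun _ hx t ht =>
    (isOpenMap_smul₀ ht.ne').mapsTo_interior (fun y hy => hs y hy t ht) hx

theorem mapsTo_inter_raysBddBelow (hs : IsCone s) {L : E →ₗ[ℝ] E} (hL : Set.MapsTo L s s)
    (hf : Set.EqOn (f ∘ L) f s) :
    Set.MapsTo L (s ∩ raysBddBelow f) (s ∩ raysBddBelow f) := by
  rintro x ⟨hx, hbdd⟩
  refine ⟨hL hx, hbdd.mono_ge ?_⟩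
  filter_upwards [hs.eventually_smul_mem hx] with t ht
  rw [← map_smul]
  exact (hf ht).ge

theorem convex_inter_raysBddBelow (hs : IsCone s) (hf : ConcaveOn ℝ s f) :
    Convex ℝ (s ∩ raysBddBelow f) := by
  rintro x ⟨hx, C, hC⟩ y ⟨hy, D, hD⟩ a b ha hb hab
  refine ⟨hf.1 hx hy ha hb hab, a * C + b * D, eventually_map.2 ?_⟩
  filter_upwards [eventually_map.1 hC, eventually_map.1 hD, hs.eventually_smul_mem hx,
    hs.eventually_smul_mem hy] with t hCt hDt hxt hyt
  calc a * C + b * D ≤ a * f (t • x) + b * f (t • y) := by gcongr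
    _ ≤ f (a • t • x + b • t • y) := hf.2 hxt hyt ha hb hab
    _ = f (t • (a • x + b • y)) := by rw [smul_add, smul_comm t a, smul_comm t b]

end IsCone

end Ray

section Coordinates

variable {n : ℕ} {s Γ : Set (EuclideanSpace ℝ (Fin n))} {f : EuclideanSpace ℝ (Fin n) → ℝ}

/-- The permutation of coordinates `x ↦ (x_{e(1)}, …, x_{e(n)})`, as a linear isometry.
`piLpCongrLeft` moves coordinate `i` to position `e i`, hence the inverse of `e`. -/
noncomputable def permCoords (e : Equiv.Perm (Fin n)) :
    EuclideanSpace ℝ (Fin n) ≃ₗᵢ[ℝ] EuclideanSpace ℝ (Fin n) :=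
  LinearIsometryEquiv.piLpCongrLeft 2 ℝ ℝ e.symm

/-- Symmetric convex cones in `ℝⁿ`: convex cones with vertex at the origin that are stable under
permutations of the coordinates. -/
structure IsSymmConvexCone (s : Set (EuclideanSpace ℝ (Fin n))) : Prop where
  isCone : IsCone s
  mapsTo_permCoords (e : Equiv.Perm (Fin n)) : Set.MapsTo (permCoords e) s s
  convex : Convex ℝ s

theorem IsSymmConvexCone.interior (hs : IsSymmConvexCone s) : IsSymmConvexCone (interior s) where
  isCone := hs.isCone.interior
  mapsTo_permCoords e :=
    (permCoords e).toHomeomorph.isOpenMap.mapsTo_interior (hs.mapsTo_permCoords e)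
  convex := hs.convex.interior

theorem GammaG_eq_inter_raysBddBelow (Γ : Set (EuclideanSpace ℝ (Fin n)))
    (f : EuclideanSpace ℝ (Fin n) → ℝ) : GammaG Γ f = Γ ∩ raysBddBelow f :=
  rfl

theorem isSymmConvexCone_GammaG (hΓcone : IsCone Γ)
    (hΓsymm : ∀ e, Set.MapsTo (permCoords e) Γ Γ)
    (hfsymm : ∀ e, Set.EqOn (f ∘ permCoords e) f Γ) (hconc : ConcaveOn ℝ Γ f) :
    IsSymmConvexCone (GammaG Γ f) := by
  rw [GammaG_eq_inter_raysBddBelow]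
  exact
    { isCone := hΓcone.inter (isCone_raysBddBelow f)
      mapsTo_permCoords := fun e =>
        hΓcone.mapsTo_inter_raysBddBelow (L := (permCoords e).toLinearEquiv.toLinearMap)
          (hΓsymm e) (hfsymm e)
      convex := hΓcone.convex_inter_raysBddBelow hconc }

theorem isOpen_setOf_forall_pos : IsOpen {x : EuclideanSpace ℝ (Fin n) | ∀ i, 0 < x i} := by
  rw [Set.ofPred_forall]
  exact isOpen_iInter_of_finite fun i => isOpen_lt continuous_const (by fun_prop)

theorem setOf_forall_pos_subset_raysBddBelow
    (hmono : ∀ x y, (∀ i, 0 < x i) → (∀ i, x i ≤ y i) → f x ≤ f y) :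
    {x : EuclideanSpace ℝ (Fin n) | ∀ i, 0 < x i} ⊆ raysBddBelow f :=
  fun x hx => mem_raysBddBelow_of_forall_le fun t ht =>
    hmono x (t • x) hx fun i => le_mul_of_one_le_left (hx i).le ht

theorem fderiv_apply_eq_sum_fpartial (f : EuclideanSpace ℝ (Fin n) → ℝ)
    (x v : EuclideanSpace ℝ (Fin n)) : fderiv ℝ f x v = ∑ i, v i * fpartial f i x := by
  conv_lhs => rw [← (EuclideanSpace.basisFun (Fin n) ℝ).sum_repr v]
  simp [fpartial]

theorem le_of_fpartial_nonneg (hs : Convex ℝ s) (hf : ∀ z ∈ s, DifferentiableAt ℝ f z)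
    (hf' : ∀ z ∈ s, ∀ i, 0 ≤ fpartial f i z) {x y : EuclideanSpace ℝ (Fin n)} (hx : x ∈ s)
    (hy : y ∈ s) (hxy : ∀ i, x i ≤ y i) : f x ≤ f y := by
  obtain ⟨z, hz, hmvt⟩ :=
    domain_mvt (fun z hz => (hf z hz).hasFDerivAt.hasFDerivWithinAt) hs hx hy
  have hzs : z ∈ s := hs.segment_subset hx hy hz
  rw [← sub_nonneg, hmvt, fderiv_apply_eq_sum_fpartial]
  exact Finset.sum_nonneg fun i _ => mul_nonneg (sub_nonneg.2 (hxy i)) (hf' z hzs i)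

end Coordinates

theorem stmt2_general {n : ℕ} {Γ : Set (EuclideanSpace ℝ (Fin n))}
    {f : EuclideanSpace ℝ (Fin n) → ℝ} (hΓcone : IsCone Γ)
    (hΓsymm : ∀ e, Set.MapsTo (permCoords e) Γ Γ)
    (hΓpos : {x : EuclideanSpace ℝ (Fin n) | ∀ i, 0 < x i} ⊆ Γ)
    (hfsymm : ∀ e, Set.EqOn (f ∘ permCoords e) f Γ)
    (hmono : ∀ x y, (∀ i, 0 < x i) → (∀ i, x i ≤ y i) → f x ≤ f y)
    (hconc : ConcaveOn ℝ Γ f) :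
    IsSymmConvexCone (GammaG Γ f) ∧
    {x : EuclideanSpace ℝ (Fin n) | ∀ i, 0 < x i} ⊆ GammaG Γ f ∧
    GammaG Γ f ⊆ Γ ∧
    IsOpen (interior (GammaG Γ f)) ∧
    IsSymmConvexCone (interior (GammaG Γ f)) ∧
    {x : EuclideanSpace ℝ (Fin n) | ∀ i, 0 < x i} ⊆ interior (GammaG Γ f) ∧
    interior (GammaG Γ f) ⊆ Γ := by
  have hG : IsSymmConvexCone (GammaG Γ f) := isSymmConvexCone_GammaG hΓcone hΓsymm hfsymm hconc
  have hpos : {x : EuclideanSpace ℝ (Fin n) | ∀ i, 0 < x i} ⊆ GammaG Γ f :=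
    Set.subset_inter hΓpos (setOf_forall_pos_subset_raysBddBelow hmono)
  have hsub : GammaG Γ f ⊆ Γ := Set.inter_subset_left
  exact ⟨hG, hpos, hsub, isOpen_interior, hG.interior,
    interior_maximal hpos isOpen_setOf_forall_pos, interior_subset.trans hsub⟩

/-- Lemma: under ellipticity and concavity, `Γ_G^f` is a symmetric convex cone with vertex at
the origin and `Γₙ ⊆ Γ_G^f ⊆ Γ`; consequently its interior is an open symmetric convex cone
with vertex at the origin and `Γₙ ⊆ int(Γ_G^f) ⊆ Γ`. -/
theorem stmt2 {n : ℕ} (Γ : Set (EuclideanSpace ℝ (Fin n)))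
    (f : EuclideanSpace ℝ (Fin n) → ℝ)
    (hΓopen : IsOpen Γ) (hΓconv : Convex ℝ Γ)
    (hΓcone : ∀ x ∈ Γ, ∀ t : ℝ, 0 < t → t • x ∈ Γ)
    (hΓsymm : ∀ e : Equiv.Perm (Fin n), ∀ x ∈ Γ, WithLp.toLp 2 (fun i => x (e i)) ∈ Γ)
    (hΓbdry : (frontier Γ).Nonempty)
    (hΓpos : {x : EuclideanSpace ℝ (Fin n) | ∀ i, 0 < x i} ⊆ Γ)
    (hfsmooth : ContDiffOn ℝ (⊤ : ℕ∞) f Γ)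
    (hfsymm : ∀ e : Equiv.Perm (Fin n), ∀ x ∈ Γ, f (WithLp.toLp 2 (fun i => x (e i))) = f x)
    (hellip : ∀ x ∈ Γ, ∀ i, 0 < fpartial f i x)
    (hconc : ConcaveOn ℝ Γ f) :
    (∀ x ∈ GammaG Γ f, ∀ t : ℝ, 0 < t → t • x ∈ GammaG Γ f) ∧
    (∀ e : Equiv.Perm (Fin n), ∀ x ∈ GammaG Γ f, WithLp.toLp 2 (fun i => x (e i)) ∈ GammaG Γ f) ∧
    Convex ℝ (GammaG Γ f) ∧
    {x : EuclideanSpace ℝ (Fin n) | ∀ i, 0 < x i} ⊆ GammaG Γ f ∧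
    GammaG Γ f ⊆ Γ ∧
    IsOpen (interior (GammaG Γ f)) ∧
    (∀ x ∈ interior (GammaG Γ f), ∀ t : ℝ, 0 < t → t • x ∈ interior (GammaG Γ f)) ∧
    (∀ e : Equiv.Perm (Fin n), ∀ x ∈ interior (GammaG Γ f),
      WithLp.toLp 2 (fun i => x (e i)) ∈ interior (GammaG Γ f)) ∧
    Convex ℝ (interior (GammaG Γ f)) ∧
    {x : EuclideanSpace ℝ (Fin n) | ∀ i, 0 < x i} ⊆ interior (GammaG Γ f) ∧
    interior (GammaG Γ f) ⊆ Γ := by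
  have hdiff : ∀ x ∈ Γ, DifferentiableAt ℝ f x := fun x hx =>
    (hfsmooth.contDiffAt (hΓopen.mem_nhds hx)).differentiableAt (by simp)
  have hmono : ∀ x y, (∀ i, 0 < x i) → (∀ i, x i ≤ y i) → f x ≤ f y := fun x y hx hxy =>
    le_of_fpartial_nonneg hΓconv hdiff (fun z hz i => (hellip z hz i).le) (hΓpos hx)
      (hΓpos fun i => (hx i).trans_le (hxy i)) hxy
  obtain ⟨hG, hpos, hsub, hopen, hI, hposI, hsubI⟩ :=
    stmt2_general hΓcone hΓsymm hΓpos hfsymm hmono hconc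
  exact ⟨hG.isCone, hG.mapsTo_permCoords, hG.convex, hpos, hsub, hopen,
    hI.isCone, hI.mapsTo_permCoords, hI.convex, hposI, hsubI⟩
end

section
/- Assume the diagonal entries of the arrow matrix A are distinct and increasing: d₁ < d₂ < … < d_{n−1}. Let ε be a constant with 0 < ε ≤ (1/2)·min{|d_i − d_j| : i ≠ j}, and let λ₁ ≤ … ≤ λₙ denote the eigenvalues of A in nondecreasing order. If 𝐚 ≥ (1/ε)·Σ_{i=1}^{n−1}|a_i|² + (n−1)·Σ_{i=1}^{n−1}|d_i| + (n−2)ε, then |d_α − λ_α| < ε for every 1 ≤ α ≤ n−1, and 0 ≤ λₙ − 𝐚 < (n−1)ε. -/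
open Filter

/-- The `(n+1) × (n+1)` Hermitian "arrow" matrix with diagonal `d₁, …, dₙ, 𝐚`, last column
`a₁, …, aₙ` and last row `conj a₁, …, conj aₙ`. -/
noncomputable def arrowMatrix {n : ℕ} (d : Fin n → ℝ) (a : Fin n → ℂ) (aa : ℝ) :
    Matrix (Fin (n + 1)) (Fin (n + 1)) ℂ :=
  Matrix.of fun i j =>
    Fin.lastCases
      (Fin.lastCases ((aa : ℂ)) (fun β => (starRingEnd ℂ) (a β)) j)
      (fun α => Fin.lastCases (a α) (fun β => if α = β then (d α : ℂ) else 0) j)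
      i

/-!
Both bounds on `λ_α` are Courant–Fischer estimates on coordinate subspaces. On the span of
`e_1, …, e_α` the quadratic form of `A` is diagonal and at most `d_α ‖x‖²`, so `λ_α ≤ d_α`. On the
span of `e_α, …, e_{n+1}` each cross term is absorbed by Young's inequality
`2 |x_β| |a_β| |y| ≤ ε |x_β|² + ε⁻¹ |a_β|² |y|²`, where `y = x_{n+1}`, so the form dominates the
diagonal form with entries `d_β - ε` and `𝐚 - ε⁻¹ ∑ |a_β|²`, whence `d_α - ε < λ_α` once `𝐚` is
large. The trace identity `λ_{n+1} - 𝐚 = ∑ (d_α - λ_α)` then controls the top eigenvalue.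
-/

open Finset Module Submodule
open scoped InnerProductSpace

section CoordinateSubspace

variable {R M ι : Type*} [Semiring R] [AddCommMonoid M] [Module R M] (b : Basis ι R M)
  (s : Finset ι)

lemma finrank_span_basis_image [Nontrivial R] [StrongRankCondition R] :
    finrank R (span R (b '' s)) = #s := by
  have hli : LinearIndependent R fun i : s => b i :=
    b.linearIndependent.comp _ Subtype.val_injective
  rw [← Fintype.card_coe, ← finrank_span_eq_card hli, Set.image_eq_range]
  rfl

variable {b s} in
lemma repr_eq_zero_of_mem_span_basis_image {x : M} (hx : x ∈ span R (b '' s)) {i : ι}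
    (hi : i ∉ s) : b.repr x i = 0 :=
  Finsupp.notMem_support_iff.mp fun h => hi (b.mem_span_image.mp hx h)

end CoordinateSubspace

section CourantFischer

variable {𝕜 E ι : Type*} [RCLike 𝕜] [NormedAddCommGroup E] [InnerProductSpace 𝕜 E] [Fintype ι]
  {T : E →ₗ[𝕜] E} {b : OrthonormalBasis ι 𝕜 E} {μ : ι → ℝ}

lemma re_inner_apply_eq_sum_eigenvalues (hT : ∀ i, T (b i) = (μ i : 𝕜) • b i) (x : E) :
    RCLike.re ⟪x, T x⟫_𝕜 = ∑ i, μ i * ‖b.repr x i‖ ^ 2 := by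
  have hTx : T x = ∑ i, (b.repr x i * (μ i : 𝕜)) • b i := by
    conv_lhs => rw [← b.sum_repr x]
    simp only [map_sum, map_smul, hT, smul_smul]
  rw [hTx, inner_sum, map_sum]
  refine sum_congr rfl fun i _ => ?_
  rw [inner_smul_right, ← inner_conj_symm, ← b.repr_apply_apply, mul_right_comm, RCLike.mul_conj]
  norm_cast
  exact mul_comm _ _

lemma exists_mem_mul_norm_sq_le_re_inner (hT : ∀ i, T (b i) = (μ i : 𝕜) • b i) {s : Finset ι}
    {c : ℝ} (hc : ∀ i ∉ s, c ≤ μ i) {V : Submodule 𝕜 E} (hV : #s < finrank 𝕜 V) :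
    ∃ x ∈ V, x ≠ 0 ∧ c * ‖x‖ ^ 2 ≤ RCLike.re ⟪x, T x⟫_𝕜 := by
  classical
  have := b.toBasis.finiteDimensional_of_finite
  have hdisj : ¬Disjoint V (span 𝕜 (b.toBasis '' (sᶜ : Finset ι))) := fun h => by
    have hle := finrank_add_finrank_le_of_disjoint h
    rw [finrank_span_basis_image, finrank_eq_card_basis b.toBasis, card_compl] at hle
    have := s.card_le_univ
    lia
  obtain ⟨x, hxV, hxs, hx0⟩ : ∃ x ∈ V, x ∈ span 𝕜 (b.toBasis '' (sᶜ : Finset ι)) ∧ x ≠ 0 := by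
    simpa [disjoint_def] using hdisj
  refine ⟨x, hxV, hx0, ?_⟩
  rw [re_inner_apply_eq_sum_eigenvalues hT, ← b.repr.norm_map, EuclideanSpace.norm_sq_eq, mul_sum]
  refine sum_le_sum fun i _ => ?_
  by_cases hi : i ∈ s
  · have hxi : b.repr x i = 0 := by
      simpa using repr_eq_zero_of_mem_span_basis_image hxs (notMem_compl.mpr hi)
    simp [hxi]
  · exact mul_le_mul_of_nonneg_right (hc i hi) (sq_nonneg _)

variable [LinearOrder ι]

lemma eigenvalue_le_of_re_inner_le [LocallyFiniteOrderBot ι]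
    (hT : ∀ i, T (b i) = (μ i : 𝕜) • b i) (hμ : Monotone μ) {k : ι} {c : ℝ} {V : Submodule 𝕜 E}
    (hV : #(Iio k) < finrank 𝕜 V) (hle : ∀ x ∈ V, RCLike.re ⟪x, T x⟫_𝕜 ≤ c * ‖x‖ ^ 2) :
    μ k ≤ c := by
  obtain ⟨x, hxV, hx0, hx⟩ := exists_mem_mul_norm_sq_le_re_inner hT
    (fun i hi => hμ (not_lt.mp (mem_Iio.not.mp hi))) hV
  exact le_of_mul_le_mul_right (hx.trans (hle x hxV)) (by positivity)

lemma lt_eigenvalue_of_lt_re_inner [LocallyFiniteOrderTop ι]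
    (hT : ∀ i, T (b i) = (μ i : 𝕜) • b i) (hμ : Monotone μ) {k : ι} {c : ℝ} {V : Submodule 𝕜 E}
    (hV : #(Ioi k) < finrank 𝕜 V)
    (hlt : ∀ x ∈ V, x ≠ 0 → c * ‖x‖ ^ 2 < RCLike.re ⟪x, T x⟫_𝕜) : c < μ k := by
  have hT' : ∀ i, (-T) (b i) = ((-μ i : ℝ) : 𝕜) • b i := fun i => by simp [hT]
  obtain ⟨x, hxV, hx0, hx⟩ := exists_mem_mul_norm_sq_le_re_inner hT'
    (fun i hi => neg_le_neg (hμ (not_lt.mp (mem_Ioi.not.mp hi)))) hV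
  have hx' : RCLike.re ⟪x, T x⟫_𝕜 ≤ μ k * ‖x‖ ^ 2 := by
    simpa [inner_neg_right] using hx
  exact lt_of_mul_lt_mul_right ((hlt x hxV hx0).trans_le hx') (sq_nonneg _)

end CourantFischer

lemma exists_eigenbasis_of_eq_eigenvalues_comp {𝕜 ι κ : Type*} [RCLike 𝕜] [Fintype ι]
    [DecidableEq ι] [Fintype κ] {A : Matrix ι ι 𝕜} (hA : A.IsHermitian) {μ : κ → ℝ} (e : κ ≃ ι)
    (he : ∀ k, μ k = hA.eigenvalues (e k)) :
    ∃ b : OrthonormalBasis κ 𝕜 (EuclideanSpace 𝕜 ι),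
      ∀ k, A.toEuclideanLin (b k) = (μ k : 𝕜) • b k := by
  refine ⟨hA.eigenvectorBasis.reindex e.symm, fun k => ?_⟩
  rw [OrthonormalBasis.reindex_apply, Equiv.symm_symm, he, Matrix.toLpLin_apply,
    hA.mulVec_eigenvectorBasis, RCLike.real_smul_eq_coe_smul (K := 𝕜)]
  rfl

lemma norm_sq_eq_sum_castSucc_add {𝕜 : Type*} [RCLike 𝕜] {n : ℕ}
    (x : EuclideanSpace 𝕜 (Fin (n + 1))) :
    ‖x‖ ^ 2 = ∑ i : Fin n, ‖x i.castSucc‖ ^ 2 + ‖x (Fin.last n)‖ ^ 2 := by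
  rw [EuclideanSpace.norm_sq_eq, Fin.sum_univ_castSucc]

section ArrowMatrix

variable {n : ℕ} {d : Fin n → ℝ} {a : Fin n → ℂ} {aa : ℝ}

lemma sum_eigenvalues_arrowMatrix (hA : (arrowMatrix d a aa).IsHermitian) :
    ∑ i, hA.eigenvalues i = ∑ i, d i + aa := by
  have htrace : (arrowMatrix d a aa).trace = ((∑ i, d i + aa : ℝ) : ℂ) := by
    simp [Matrix.trace, Fin.sum_univ_castSucc, arrowMatrix]
  rw [hA.trace_eq_sum_eigenvalues, ← RCLike.ofReal_sum] at htrace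
  exact Complex.ofReal_injective htrace

lemma re_inner_arrowMatrix (x : EuclideanSpace ℂ (Fin (n + 1))) :
    RCLike.re ⟪x, (arrowMatrix d a aa).toEuclideanLin x⟫_ℂ =
      ∑ i, (d i * ‖x i.castSucc‖ ^ 2
          + 2 * (a i * x (Fin.last n) * star (x i.castSucc)).re)
        + aa * ‖x (Fin.last n)‖ ^ 2 := by
  have hrow (i : Fin n) : (arrowMatrix d a aa).toEuclideanLin x i.castSucc =
      d i * x i.castSucc + a i * x (Fin.last n) := by
    simp [Matrix.mulVec, dotProduct, Fin.sum_univ_castSucc, arrowMatrix]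
  have hlast : (arrowMatrix d a aa).toEuclideanLin x (Fin.last n) =
      ∑ i, star (a i) * x i.castSucc + aa * x (Fin.last n) := by
    simp [Matrix.mulVec, dotProduct, Fin.sum_univ_castSucc, arrowMatrix]
  have hcross (u v w : ℂ) : (star u * v * star w).re = (u * w * star v).re := by
    rw [← Complex.conj_re, mul_right_comm]
    simp only [map_mul, RCLike.star_def, Complex.conj_conj]
  have hdiag (c : ℝ) (z : ℂ) : (c * z * star z).re = c * ‖z‖ ^ 2 := by
    rw [mul_assoc, RCLike.star_def, Complex.mul_conj']
    norm_cast
  simp only [PiLp.inner_apply, RCLike.inner_apply, Fin.sum_univ_castSucc, hrow, hlast, add_mul,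
    sum_mul, sum_add_distrib, RCLike.re_eq_complex_re, Complex.add_re, Complex.re_sum,
    ← RCLike.star_def, hcross, hdiag, ← mul_sum]
  ring

lemma re_inner_arrowMatrix_of_last_eq_zero {x : EuclideanSpace ℂ (Fin (n + 1))}
    (hx : x (Fin.last n) = 0) :
    RCLike.re ⟪x, (arrowMatrix d a aa).toEuclideanLin x⟫_ℂ =
      ∑ i, d i * ‖x i.castSucc‖ ^ 2 := by
  rw [re_inner_arrowMatrix]
  simp [hx]

lemma sum_add_le_re_inner_arrowMatrix {ε : ℝ} (hε : 0 < ε)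
    (x : EuclideanSpace ℂ (Fin (n + 1))) :
    ∑ i, (d i - ε) * ‖x i.castSucc‖ ^ 2
        + (aa - ε⁻¹ * ∑ i, ‖a i‖ ^ 2) * ‖x (Fin.last n)‖ ^ 2 ≤
      RCLike.re ⟪x, (arrowMatrix d a aa).toEuclideanLin x⟫_ℂ := by
  set y := x (Fin.last n) with hy
  have hyoung (i : Fin n) : (d i - ε) * ‖x i.castSucc‖ ^ 2 - ε⁻¹ * (‖a i‖ ^ 2 * ‖y‖ ^ 2) ≤
      d i * ‖x i.castSucc‖ ^ 2 + 2 * (a i * y * star (x i.castSucc)).re := by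
    have hre := neg_le_of_abs_le (Complex.abs_re_le_norm (a i * y * star (x i.castSucc)))
    rw [norm_mul, norm_mul, norm_star] at hre
    linarith [two_mul_le_add_mul_sq (a := ‖x i.castSucc‖) (b := ‖a i‖ * ‖y‖) hε]
  calc _ = ∑ i, ((d i - ε) * ‖x i.castSucc‖ ^ 2 - ε⁻¹ * (‖a i‖ ^ 2 * ‖y‖ ^ 2)) + aa * ‖y‖ ^ 2 := by
        rw [sum_sub_distrib, ← mul_sum, ← sum_mul]
        ring
    _ ≤ _ := by
        rw [re_inner_arrowMatrix, ← hy]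
        gcongr with i
        exact hyoung i

lemma re_inner_arrowMatrix_le_mul_norm_sq {x : EuclideanSpace ℂ (Fin (n + 1))} {c : ℝ}
    (hlast : x (Fin.last n) = 0) (hdc : ∀ i, x i.castSucc ≠ 0 → d i ≤ c) :
    RCLike.re ⟪x, (arrowMatrix d a aa).toEuclideanLin x⟫_ℂ ≤ c * ‖x‖ ^ 2 := by
  rw [re_inner_arrowMatrix_of_last_eq_zero hlast, norm_sq_eq_sum_castSucc_add, hlast, norm_zero,
    zero_pow two_ne_zero, add_zero, mul_sum]
  refine sum_le_sum fun i _ => ?_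
  obtain hi | hi := eq_or_ne (x i.castSucc) 0
  · simp [hi]
  · exact mul_le_mul_of_nonneg_right (hdc i hi) (sq_nonneg _)

lemma mul_norm_sq_lt_re_inner_arrowMatrix {x : EuclideanSpace ℂ (Fin (n + 1))} {c ε : ℝ}
    (hε : 0 < ε) (haa : c + ε⁻¹ * ∑ i, ‖a i‖ ^ 2 < aa)
    (hdc : ∀ i, x i.castSucc ≠ 0 → c + ε ≤ d i) (hx : x ≠ 0) :
    c * ‖x‖ ^ 2 < RCLike.re ⟪x, (arrowMatrix d a aa).toEuclideanLin x⟫_ℂ := by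
  have hterm (i : Fin n) : (c + ε) * ‖x i.castSucc‖ ^ 2 ≤ d i * ‖x i.castSucc‖ ^ 2 := by
    obtain hi | hi := eq_or_ne (x i.castSucc) 0
    · simp [hi]
    · exact mul_le_mul_of_nonneg_right (hdc i hi) (sq_nonneg _)
  obtain hlast | hlast := eq_or_ne (x (Fin.last n)) 0
  · calc c * ‖x‖ ^ 2 < (c + ε) * ‖x‖ ^ 2 := by
          have : 0 < ‖x‖ := norm_pos_iff.mpr hx
          gcongr
          linarith
      _ = ∑ i : Fin n, (c + ε) * ‖x i.castSucc‖ ^ 2 := by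
          simp [norm_sq_eq_sum_castSucc_add, hlast, mul_sum]
      _ ≤ ∑ i, d i * ‖x i.castSucc‖ ^ 2 := sum_le_sum fun i _ => hterm i
      _ = _ := (re_inner_arrowMatrix_of_last_eq_zero hlast).symm
  · calc c * ‖x‖ ^ 2
        = ∑ i : Fin n, c * ‖x i.castSucc‖ ^ 2 + c * ‖x (Fin.last n)‖ ^ 2 := by
          rw [norm_sq_eq_sum_castSucc_add, mul_add, mul_sum]
      _ < ∑ i, (d i - ε) * ‖x i.castSucc‖ ^ 2
          + (aa - ε⁻¹ * ∑ i, ‖a i‖ ^ 2) * ‖x (Fin.last n)‖ ^ 2 := by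
          refine add_lt_add_of_le_of_lt (sum_le_sum fun i _ => ?_) ?_
          · linarith [hterm i]
          · exact mul_lt_mul_of_pos_right (by linarith) (by positivity)
      _ ≤ _ := sum_add_le_re_inner_arrowMatrix hε x

section Eigenvalues

variable {lam : Fin (n + 1) → ℝ}
  {b : OrthonormalBasis (Fin (n + 1)) ℂ (EuclideanSpace ℂ (Fin (n + 1)))}

lemma arrowMatrix_eigenvalue_le (hd : Monotone d) (hlam : Monotone lam)
    (hb : ∀ i, (arrowMatrix d a aa).toEuclideanLin (b i) = (lam i : ℂ) • b i) (α : Fin n) :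
    lam α.castSucc ≤ d α := by
  let e := (EuclideanSpace.basisFun (Fin (n + 1)) ℂ).toBasis
  refine eigenvalue_le_of_re_inner_le hb hlam (V := span ℂ (e '' Iic α.castSucc)) ?_
    fun x hx => ?_
  · rw [finrank_span_basis_image]
    simp
  · have hsupp (j : Fin (n + 1)) (hj : α.castSucc < j) : x j = 0 := by
      simpa [e] using repr_eq_zero_of_mem_span_basis_image hx (by simpa using hj)
    refine re_inner_arrowMatrix_le_mul_norm_sq (hsupp _ α.castSucc_lt_last) fun i hi => ?_
    exact hd (not_lt.mp fun h => hi (hsupp _ h))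

lemma sub_lt_arrowMatrix_eigenvalue (hd : Monotone d) (hlam : Monotone lam)
    (hb : ∀ i, (arrowMatrix d a aa).toEuclideanLin (b i) = (lam i : ℂ) • b i) {ε : ℝ}
    (hε : 0 < ε) {α : Fin n} (haa : d α - ε + ε⁻¹ * ∑ i, ‖a i‖ ^ 2 < aa) :
    d α - ε < lam α.castSucc := by
  let e := (EuclideanSpace.basisFun (Fin (n + 1)) ℂ).toBasis
  refine lt_eigenvalue_of_lt_re_inner hb hlam (V := span ℂ (e '' Ici α.castSucc)) ?_
    fun x hx hx0 => ?_
  · rw [finrank_span_basis_image, Fin.card_Ioi, Fin.card_Ici, Fin.val_castSucc]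
    lia
  · have hsupp (j : Fin (n + 1)) (hj : j < α.castSucc) : x j = 0 := by
      simpa [e] using repr_eq_zero_of_mem_span_basis_image hx (by simpa using hj)
    refine mul_norm_sq_lt_re_inner_arrowMatrix hε haa (fun i hi => ?_) hx0
    rw [sub_add_cancel]
    exact hd (not_lt.mp fun h => hi (hsupp _ h))

end Eigenvalues

end ArrowMatrix

lemma sub_add_lt_of_add_mul_sum_abs_le {n : ℕ} {d : Fin n → ℝ} {ε S t : ℝ} (hε : 0 < ε)
    (ht : S + n * ∑ i, |d i| + (n - 1) * ε ≤ t) (α : Fin n) : d α - ε + S < t := by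
  have hn : (1 : ℝ) ≤ n := by exact_mod_cast α.pos
  have hdα : d α ≤ n * ∑ i, |d i| :=
    calc d α ≤ |d α| := le_abs_self _
      _ ≤ ∑ i, |d i| := single_le_sum (fun i _ => abs_nonneg (d i)) (mem_univ α)
      _ ≤ n * ∑ i, |d i| := le_mul_of_one_le_left (sum_nonneg fun i _ => abs_nonneg _) hn
  have hnε : 0 ≤ (n - 1) * ε := mul_nonneg (sub_nonneg.mpr hn) hε.le
  linarith

theorem stmt10_general {n : ℕ} (hn : 1 ≤ n) (d : Fin n → ℝ) (a : Fin n → ℂ) (aa : ℝ)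
    (hd : Monotone d)
    (hA : (arrowMatrix d a aa).IsHermitian)
    (lam : Fin (n + 1) → ℝ) (hmono : Monotone lam)
    (hperm : ∃ e : Equiv.Perm (Fin (n + 1)), ∀ k, lam k = hA.eigenvalues (e k))
    (ε : ℝ) (hε : 0 < ε)
    (hgrow : ∀ α, d α - ε + ε⁻¹ * ∑ i, ‖a i‖ ^ 2 < aa) :
    (∀ α : Fin n, |d α - lam α.castSucc| < ε) ∧
    0 ≤ lam (Fin.last n) - aa ∧
    lam (Fin.last n) - aa < n * ε := by
  obtain ⟨e, he⟩ := hperm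
  obtain ⟨b, hb⟩ := exists_eigenbasis_of_eq_eigenvalues_comp hA e he
  have hle (α : Fin n) : 0 ≤ d α - lam α.castSucc :=
    sub_nonneg.mpr (arrowMatrix_eigenvalue_le hd hmono hb α)
  have hlt (α : Fin n) : d α - lam α.castSucc < ε :=
    sub_lt_comm.mp (sub_lt_arrowMatrix_eigenvalue hd hmono hb hε (hgrow α))
  have htop : lam (Fin.last n) - aa = ∑ α : Fin n, (d α - lam α.castSucc) := by
    have htrace := sum_eigenvalues_arrowMatrix hA
    rw [← Equiv.sum_comp e, ← Fintype.sum_congr _ _ he, Fin.sum_univ_castSucc] at htrace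
    rw [sum_sub_distrib]
    linarith
  refine ⟨fun α => by rw [abs_of_nonneg (hle α)]; exact hlt α, ?_, ?_⟩
  · exact htop ▸ sum_nonneg fun α _ => hle α
  · have : Nonempty (Fin n) := ⟨⟨0, hn⟩⟩
    simpa [htop] using sum_lt_sum_of_nonempty univ_nonempty fun α _ => hlt α

/-- Lemma 10.2: distinct increasing diagonal entries; for `0 < ε ≤ ½ min_{i≠j} |d_i − d_j|`
and `𝐚` satisfying the quadratic growth condition, the ordered eigenvalues satisfy
`|d_α − λ_α| < ε` for `α < n` and `0 ≤ λₙ − 𝐚 < (n−1)ε`.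
(Here the matrix has total size `n+1`, so `n-1` of the statement corresponds to `n`.) -/
theorem stmt10 {n : ℕ} (hn : 1 ≤ n) (d : Fin n → ℝ) (a : Fin n → ℂ) (aa : ℝ)
    (hd : StrictMono d)
    (hA : (arrowMatrix d a aa).IsHermitian)
    (lam : Fin (n + 1) → ℝ) (hmono : Monotone lam)
    (hperm : ∃ e : Equiv.Perm (Fin (n + 1)), ∀ k, lam k = hA.eigenvalues (e k))
    (ε : ℝ) (hε : 0 < ε)
    (hεmin : ∀ i j : Fin n, i ≠ j → ε ≤ |d i - d j| / 2)
    (hgrow : aa ≥ (1 / ε) * ∑ i, ‖a i‖ ^ 2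
        + (((n : ℝ) + 1) - 1) * ∑ i, |d i|
        + (((n : ℝ) + 1) - 2) * ε) :
    (∀ α : Fin n, |d α - lam α.castSucc| < ε) ∧
    0 ≤ lam (Fin.last n) - aa ∧
    lam (Fin.last n) - aa < (((n : ℝ) + 1) - 1) * ε := by
  rw [add_sub_cancel_right]
  exact stmt10_general hn d a aa hd.monotone hA lam hmono hperm ε hε <|
    sub_add_lt_of_add_mul_sum_abs_le hε (by rw [← one_div]; linarith)
end
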